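/- arXiv:1506.03437 — 7 statements merged into one kernel-verified Lean document; each statement's English description precedes it below -/
import Mathlib

section
/- Let n ≥ 1 and let L_p, Q, R be symmetric n×n real matrices with L_p·𝟙 = 0, let E be an n×m real matrix with Eᵀ𝟙 = 0, and let x ∈ ℝᵐ. Set L_x = E·diag(x)·Eᵀ, G_p = L_p + (1/n)𝟙𝟙ᵀ, Q_p = Q + (1/n)𝟙𝟙ᵀ + L_p R L_p, and G = G_p + L_x. If G is positive definite, then trace(G⁻¹(Q + L_x R L_x)) = trace(G⁻¹Q_p) + diag(Eᵀ R E)ᵀ x − trace(R L_p) − 1, where diag(Eᵀ R E) ∈ ℝᵐ is the vector of diagonal entries of Eᵀ R E. -/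
/-!
Write `J = (1/n) 𝟙𝟙ᵀ`. Since `J` is annihilated on both sides by `Lp` and `Lx`, and `J * J = J`,
it follows that `G * J = J = J * G`, hence `G⁻¹ * J = J = J * G⁻¹`, which has trace `1`.
Substituting `Lx = G - (Lp + J)` and expanding gives the matrix identity
`Lx * G⁻¹ * Lx = Lx - Lp + Lp * G⁻¹ * Lp` (`mul_inv_mul_eq`). The result follows on multiplying
by `R` and taking traces, cyclicity turning `trace (R * Lx)` into `diag (Eᵀ R E) ⬝ᵥ x`.
-/

open Matrix


/-- Here `H` plays the role of the inverse of `P + J + X`; the idempotent `J` is absorbed by `H`. -/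
lemma mul_inv_mul_eq {A : Type*} [Ring A] {P J X H : A}
    (h1 : H * (P + J + X) = 1) (h2 : (P + J + X) * H = 1)
    (hHJ : H * J = J) (hJH : J * H = J) (hJJ : J * J = J) (hPJ : P * J = 0) (hJP : J * P = 0) :
    X * H * X = X - P + P * H * P := by
  have hXH : X * H = 1 - P * H - J := by
    rw [add_mul, add_mul, hJH] at h2
    rw [← h2]; abel
  have hHX : H * X = 1 - H * P - J := by
    rw [mul_add, mul_add, hHJ] at h1
    rw [← h1]; abel
  have hJX : J * X = 0 := by
    have h := congrArg (J * ·) hHX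
    simp only [mul_sub, mul_one, ← mul_assoc, hJH, hJP, hJJ] at h
    simpa using h
  rw [hXH, sub_mul, sub_mul, one_mul, hJX, mul_assoc, hHX, mul_sub, mul_sub, hPJ, mul_one,
    mul_assoc]
  abel

theorem stmt_0 (n m : ℕ) (hn : 1 ≤ n)
    (Lp Q R Lx Gp Qp G : Matrix (Fin n) (Fin n) ℝ) (E : Matrix (Fin n) (Fin m) ℝ)
    (x : Fin m → ℝ)
    (hLp : Lp.IsSymm) (hQ : Q.IsSymm) (hR : R.IsSymm)
    (hLp1 : Lp *ᵥ (1 : Fin n → ℝ) = 0)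
    (hE1 : Eᵀ *ᵥ (1 : Fin n → ℝ) = 0)
    (hLx : Lx = E * Matrix.diagonal x * Eᵀ)
    (hGp : Gp = Lp + (n : ℝ)⁻¹ • Matrix.of (fun _ _ => (1 : ℝ)))
    (hQp : Qp = Q + (n : ℝ)⁻¹ • Matrix.of (fun _ _ => (1 : ℝ)) + Lp * R * Lp)
    (hG : G = Gp + Lx)
    (hGpd : G.PosDef) :
    (G⁻¹ * (Q + Lx * R * Lx)).trace =
      (G⁻¹ * Qp).trace + (Eᵀ * R * E).diag ⬝ᵥ x - (R * Lp).trace - 1 := by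
  set J : Matrix (Fin n) (Fin n) ℝ := (n : ℝ)⁻¹ • Matrix.of (fun _ _ => (1 : ℝ)) with hJ
  have hn0 : (n : ℝ) ≠ 0 := by positivity
  have hmulJ : ∀ {k : ℕ} (A : Matrix (Fin k) (Fin n) ℝ), A *ᵥ (1 : Fin n → ℝ) = 0 → A * J = 0 := by
    intro k A hA
    ext i j
    have h := congrFun hA i
    simp only [Matrix.mulVec, dotProduct, Pi.one_apply, mul_one, Pi.zero_apply] at h
    simp [hJ, Matrix.mul_apply, ← Finset.sum_mul, h]
  have hJT : Jᵀ = J := by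
    ext i j
    simp [hJ]
  have hPJ : Lp * J = 0 := hmulJ Lp hLp1
  have hXJ : Lx * J = 0 := by
    rw [hLx, Matrix.mul_assoc, hmulJ Eᵀ hE1, Matrix.mul_zero]
  have hJP : J * Lp = 0 := by
    have h := congrArg Matrix.transpose hPJ
    rwa [Matrix.transpose_mul, hJT, hLp.eq, Matrix.transpose_zero] at h
  have hXT : Lxᵀ = Lx := by
    simp [hLx, Matrix.transpose_mul, Matrix.mul_assoc]
  have hJX : J * Lx = 0 := by
    have h := congrArg Matrix.transpose hXJ
    rwa [Matrix.transpose_mul, hJT, hXT, Matrix.transpose_zero] at h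
  have hJJ : J * J = J := by
    ext i j
    simp [hJ, Matrix.mul_apply, hn0]
  have hJtr : J.trace = 1 := by
    simp [hJ, Matrix.trace, hn0]
  have hG' : G = Lp + J + Lx := by rw [hG, hGp]
  have hdet : IsUnit G.det := (Matrix.isUnit_iff_isUnit_det G).mp hGpd.isUnit
  have h1 : G⁻¹ * G = 1 := Matrix.nonsing_inv_mul G hdet
  have h2 : G * G⁻¹ = 1 := Matrix.mul_nonsing_inv G hdet
  have hGJ : G * J = J := by
    rw [hG', Matrix.add_mul, Matrix.add_mul, hPJ, hXJ, hJJ]; simp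
  have hJG : J * G = J := by
    rw [hG', Matrix.mul_add, Matrix.mul_add, hJP, hJX, hJJ]; simp
  have hHJ : G⁻¹ * J = J := by
    calc G⁻¹ * J = G⁻¹ * (G * J) := by rw [hGJ]
      _ = J := by rw [← Matrix.mul_assoc, h1, Matrix.one_mul]
  have hJH : J * G⁻¹ = J := by
    calc J * G⁻¹ = J * G * G⁻¹ := by rw [hJG]
      _ = J := by rw [Matrix.mul_assoc, h2, Matrix.mul_one]
  have key : Lx * G⁻¹ * Lx = Lx - Lp + Lp * G⁻¹ * Lp :=
    mul_inv_mul_eq (hG' ▸ h1) (hG' ▸ h2) hHJ hJH hJJ hPJ hJP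
  have hcyc : ∀ M : Matrix (Fin n) (Fin n) ℝ,
      (G⁻¹ * (M * R * M)).trace = (R * (M * G⁻¹ * M)).trace := by
    intro M
    rw [← Matrix.mul_assoc, Matrix.trace_mul_comm, ← Matrix.mul_assoc, ← Matrix.mul_assoc,
      Matrix.trace_mul_comm]
  have hdiag : (R * Lx).trace = (Eᵀ * R * E).diag ⬝ᵥ x := by
    rw [hLx, ← Matrix.mul_assoc, Matrix.trace_mul_comm, ← Matrix.mul_assoc, ← Matrix.mul_assoc]
    simp [Matrix.trace, dotProduct, Matrix.mul_diagonal]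
  rw [hQp, Matrix.mul_add, Matrix.mul_add, Matrix.mul_add, Matrix.trace_add, Matrix.trace_add,
    Matrix.trace_add, hHJ, hJtr, hcyc, hcyc, key, Matrix.mul_add, Matrix.mul_sub,
    Matrix.trace_add, Matrix.trace_sub, hdiag]
  ring
end

section
/- Let E be an n×m real matrix with columns ξ₁,…,ξ_m, let G_p and Q_p be symmetric n×n real matrices, and define G(x) = G_p + E·diag(x)·Eᵀ for x ∈ ℝᵐ. Let x̄ ∈ ℝᵐ be such that G(x̄) is positive definite, and set Y = G(x̄)⁻¹ Q_p G(x̄)⁻¹. Then for each pair of indices i, j the second-order partial derivative of the function x ↦ trace(G(x)⁻¹ Q_p) at x̄ with respect to x_i and x_j equals 2 · (ξ_iᵀ G(x̄)⁻¹ ξ_j) · (ξ_iᵀ Y ξ_j); that is, the Hessian is the Hadamard (entrywise) product of the matrices 2·Eᵀ Y E and Eᵀ G(x̄)⁻¹ E. -/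
/-!
Write `G x = Gp + E diag(x) Eᵀ` and `D v = E diag(v) Eᵀ`. Wherever `G x` is invertible, the derivative of
`x ↦ (G x)⁻¹` in direction `v` is `-(G x)⁻¹ D v (G x)⁻¹` (`hasFDerivAt_inv_pencil`). Invertibility is an
open condition, so near `xbar` the first partial derivative is `-tr (G⁻¹ D eⱼ G⁻¹ Qp)`, and the product
rule turns its derivative into `tr (G⁻¹ D eᵢ G⁻¹ D eⱼ G⁻¹ Qp) + tr (G⁻¹ D eⱼ G⁻¹ D eᵢ G⁻¹ Qp)`.
Because `D eᵢ = ξᵢ ξᵢᵀ` has rank one, each trace factors into entries of `Eᵀ G⁻¹ E` and `Eᵀ Y E`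
(`trace_rank_one`), and symmetry of these two matrices makes both summands equal.
-/

open Matrix

section Calculus

-- Any norm on matrices would do: it only serves to differentiate matrix-valued maps.
attribute [local instance] Matrix.linftyOpNormedRing Matrix.linftyOpNormedAlgebra

variable {n m : ℕ}

lemma hasFDerivAt_pencil (Gp : Matrix (Fin n) (Fin n) ℝ) (E : Matrix (Fin n) (Fin m) ℝ)
    (x : Fin m → ℝ) :
    ∃ L : (Fin m → ℝ) →L[ℝ] Matrix (Fin n) (Fin n) ℝ,
      HasFDerivAt (fun z : Fin m → ℝ => Gp + E * Matrix.diagonal z * Eᵀ) L x ∧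
      ∀ v, L v = E * Matrix.diagonal v * Eᵀ := by
  let l : (Fin m → ℝ) →ₗ[ℝ] Matrix (Fin n) (Fin n) ℝ :=
    { toFun := fun v => E * Matrix.diagonal v * Eᵀ
      map_add' := fun v w => by
        rw [← Matrix.add_mul, ← Matrix.mul_add, Matrix.diagonal_add]; rfl
      map_smul' := fun c v => by
        rw [Matrix.diagonal_smul, Matrix.mul_smul, Matrix.smul_mul]; rfl }
  exact ⟨LinearMap.toContinuousLinearMap l,
    (LinearMap.toContinuousLinearMap l).hasFDerivAt.const_add Gp, fun v => rfl⟩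

lemma hasFDerivAt_inv_pencil (Gp : Matrix (Fin n) (Fin n) ℝ) (E : Matrix (Fin n) (Fin m) ℝ)
    (x : Fin m → ℝ) (hx : IsUnit (Gp + E * Matrix.diagonal x * Eᵀ)) :
    ∃ L : (Fin m → ℝ) →L[ℝ] Matrix (Fin n) (Fin n) ℝ,
      HasFDerivAt (fun z : Fin m → ℝ => (Gp + E * Matrix.diagonal z * Eᵀ)⁻¹) L x ∧
      ∀ v, L v = -((Gp + E * Matrix.diagonal x * Eᵀ)⁻¹ * (E * Matrix.diagonal v * Eᵀ) *
        (Gp + E * Matrix.diagonal x * Eᵀ)⁻¹) := by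
  obtain ⟨L, hL, hLv⟩ := hasFDerivAt_pencil Gp E x
  obtain ⟨u, hu⟩ := hx
  have h := hasFDerivAt_ringInverse (𝕜 := ℝ) u
  rw [hu] at h
  have hc := h.comp x hL
  refine ⟨_, hc.congr_of_eventuallyEq (.of_forall fun z => ?_), fun v => ?_⟩
  · simp [Matrix.nonsing_inv_eq_ringInverse]
  · change -((↑u⁻¹ : Matrix (Fin n) (Fin n) ℝ) * L v * (↑u⁻¹ : Matrix (Fin n) (Fin n) ℝ)) = _
    rw [hLv, ← hu, Matrix.coe_units_inv]

lemma hasFDerivAt_trace_mul {F : (Fin m → ℝ) → Matrix (Fin n) (Fin n) ℝ}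
    {L : (Fin m → ℝ) →L[ℝ] Matrix (Fin n) (Fin n) ℝ} {x : Fin m → ℝ} (h : HasFDerivAt F L x)
    (Q : Matrix (Fin n) (Fin n) ℝ) :
    ∃ T : (Fin m → ℝ) →L[ℝ] ℝ, HasFDerivAt (fun z => (F z * Q).trace) T x ∧
      ∀ v, T v = (L v * Q).trace := by
  let l : Matrix (Fin n) (Fin n) ℝ →ₗ[ℝ] ℝ :=
    (Matrix.traceLinearMap (Fin n) ℝ ℝ).comp (LinearMap.mulRight ℝ Q)
  exact ⟨_, (LinearMap.toContinuousLinearMap l).hasFDerivAt.comp x h, fun v => rfl⟩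

lemma fderiv_trace_inv (Gp Qp : Matrix (Fin n) (Fin n) ℝ) (E : Matrix (Fin n) (Fin m) ℝ)
    (x v : Fin m → ℝ) (hx : IsUnit (Gp + E * Matrix.diagonal x * Eᵀ)) :
    fderiv ℝ (fun z : Fin m → ℝ => ((Gp + E * Matrix.diagonal z * Eᵀ)⁻¹ * Qp).trace) x v
      = (-((Gp + E * Matrix.diagonal x * Eᵀ)⁻¹ * (E * Matrix.diagonal v * Eᵀ) *
        (Gp + E * Matrix.diagonal x * Eᵀ)⁻¹) * Qp).trace := by
  obtain ⟨L, hL, hLv⟩ := hasFDerivAt_inv_pencil Gp E x hx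
  obtain ⟨T, hT, hTv⟩ := hasFDerivAt_trace_mul hL Qp
  rw [hT.fderiv, hTv, hLv]

lemma fderiv_fderiv_trace_inv (Gp Qp : Matrix (Fin n) (Fin n) ℝ) (E : Matrix (Fin n) (Fin m) ℝ)
    (x v w : Fin m → ℝ) (hx : IsUnit (Gp + E * Matrix.diagonal x * Eᵀ))
    (A : Matrix (Fin n) (Fin n) ℝ) (hA : A = (Gp + E * Matrix.diagonal x * Eᵀ)⁻¹) :
    fderiv ℝ (fun y : Fin m → ℝ =>
        fderiv ℝ (fun z : Fin m → ℝ =>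
          ((Gp + E * Matrix.diagonal z * Eᵀ)⁻¹ * Qp).trace) y v) x w
      = (A * (E * Matrix.diagonal w * Eᵀ) * A * (E * Matrix.diagonal v * Eᵀ) * A * Qp).trace
        + (A * (E * Matrix.diagonal v * Eᵀ) * A * (E * Matrix.diagonal w * Eᵀ) * A * Qp).trace := by
  obtain ⟨P, hP, -⟩ := hasFDerivAt_pencil Gp E x
  have hev : ∀ᶠ y in nhds x, IsUnit (Gp + E * Matrix.diagonal y * Eᵀ) :=
    hP.continuousAt.eventually (Units.isOpen.mem_nhds hx)
  rw [Filter.EventuallyEq.fderiv_eq (hev.mono fun y hy => fderiv_trace_inv Gp Qp E y v hy)]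
  obtain ⟨L, hL, hLv⟩ := hasFDerivAt_inv_pencil Gp E x hx
  obtain ⟨T, hT, hTv⟩ := hasFDerivAt_trace_mul
    ((hL.mul_const' (E * Matrix.diagonal v * Eᵀ)).mul' hL).neg Qp
  refine (congrArg (fun S : (Fin m → ℝ) →L[ℝ] ℝ => S w) hT.fderiv).trans ?_
  rw [hTv, ← Matrix.trace_add]
  congr 1
  change -((Gp + E * Matrix.diagonal x * Eᵀ)⁻¹ * (E * Matrix.diagonal v * Eᵀ) * L w
    + L w * (E * Matrix.diagonal v * Eᵀ) * (Gp + E * Matrix.diagonal x * Eᵀ)⁻¹) * Qp = _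
  rw [hLv, ← hA]
  noncomm_ring

end Calculus

/-- With `D eᵢ = E diag(eᵢ) Eᵀ = ξᵢ ξᵢᵀ`, cyclicity of the trace gives
`tr (A ξᵢ ξᵢᵀ A ξⱼ ξⱼᵀ A Q) = (ξᵢᵀ A ξⱼ) (ξⱼᵀ A Q A ξᵢ)`. -/
lemma trace_rank_one {n m : ℕ} (A Q : Matrix (Fin n) (Fin n) ℝ) (E : Matrix (Fin n) (Fin m) ℝ)
    (i j : Fin m) :
    (A * (E * Matrix.diagonal (Pi.single i (1 : ℝ)) * Eᵀ) * A *
        (E * Matrix.diagonal (Pi.single j (1 : ℝ)) * Eᵀ) * A * Q).trace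
      = (Eᵀ * A * E) i j * (Eᵀ * (A * Q * A) * E) j i := by
  have h : (A * (E * Matrix.diagonal (Pi.single i (1 : ℝ)) * Eᵀ) * A *
        (E * Matrix.diagonal (Pi.single j (1 : ℝ)) * Eᵀ) * A * Q).trace
      = (Matrix.single i i (1 : ℝ) * (Eᵀ * A * E) * Matrix.single j j (1 : ℝ) *
          (Eᵀ * (A * Q * A) * E)).trace := by
    rw [Matrix.diagonal_single, Matrix.diagonal_single]
    set S := Matrix.single i i (1 : ℝ)
    set R := Matrix.single j j (1 : ℝ)
    calc _ = ((A * E) * (S * Eᵀ * A * E * R * Eᵀ * A * Q)).trace := by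
          simp only [Matrix.mul_assoc]
      _ = ((S * Eᵀ * A * E * R * Eᵀ * A * Q) * (A * E)).trace := Matrix.trace_mul_comm _ _
      _ = _ := by simp only [Matrix.mul_assoc]
  rw [h, Matrix.single_mul_mul_single, Matrix.trace_single_mul]
  simp

theorem stmt_2 (n m : ℕ) (Gp Qp : Matrix (Fin n) (Fin n) ℝ)
    (E : Matrix (Fin n) (Fin m) ℝ)
    (hGp : Gp.IsSymm) (hQp : Qp.IsSymm)
    (xbar : Fin m → ℝ)
    (hpd : (Gp + E * Matrix.diagonal xbar * Eᵀ).PosDef)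
    (Y : Matrix (Fin n) (Fin n) ℝ)
    (hY : Y = (Gp + E * Matrix.diagonal xbar * Eᵀ)⁻¹ * Qp *
      (Gp + E * Matrix.diagonal xbar * Eᵀ)⁻¹)
    (i j : Fin m) :
    fderiv ℝ
      (fun x : Fin m → ℝ =>
        fderiv ℝ (fun z : Fin m → ℝ =>
          ((Gp + E * Matrix.diagonal z * Eᵀ)⁻¹ * Qp).trace) x (Pi.single j 1))
      xbar (Pi.single i 1)
    = 2 * (Eᵀ * (Gp + E * Matrix.diagonal xbar * Eᵀ)⁻¹ * E) i j
        * ((Eᵀ * Y * E) i j) := by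
  rw [fderiv_fderiv_trace_inv Gp Qp E xbar _ _ hpd.isUnit _ rfl, trace_rank_one, trace_rank_one,
    ← hY]
  have hA : ((Gp + E * Matrix.diagonal xbar * Eᵀ)⁻¹)ᵀ
      = (Gp + E * Matrix.diagonal xbar * Eᵀ)⁻¹ := by
    have := hpd.inv.isHermitian.eq
    rwa [Matrix.conjTranspose_eq_transpose_of_trivial] at this
  generalize (Gp + E * Matrix.diagonal xbar * Eᵀ)⁻¹ = A at *
  have hM : (Eᵀ * A * E).IsSymm := by
    simp [Matrix.IsSymm, Matrix.transpose_mul, hA, Matrix.mul_assoc]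
  have hN : (Eᵀ * Y * E).IsSymm := by
    simp [Matrix.IsSymm, Matrix.transpose_mul, hY, hA, hQp.eq, Matrix.mul_assoc]
  rw [hM.apply i j, hN.apply i j]
  ring
end

section
/- Let G, Y, and Q_p be symmetric positive definite n×n real matrices. Then trace(G⁻¹ Q_p) + trace(Y G) ≥ 2 · trace( (Q_p^{1/2} Y Q_p^{1/2})^{1/2} ), where A^{1/2} denotes the unique positive semidefinite square root of a positive semidefinite matrix A. -/
open Matrix

/-!
Put `C = G⁻¹ * Qs - Qs⁻¹ * S`. Completing the square, `Cᴴ * G * C` is positive semidefinite and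
equals `Qs * G⁻¹ * Qs - S - S + S * Qs⁻¹ * G * Qs⁻¹ * S`. Its trace is nonnegative, and by
cyclicity and `Qs⁻¹ * S * S * Qs⁻¹ = Y` this trace is
`trace (G⁻¹ * Qp) - 2 * trace S + trace (Y * G)`.
-/

theorem stmt_3 (n : ℕ) (G Y Qp : Matrix (Fin n) (Fin n) ℝ)
    (hG : G.PosDef) (hY : Y.PosDef) (hQp : Qp.PosDef)
    (Qs S : Matrix (Fin n) (Fin n) ℝ)
    (hQs : Qs.PosSemidef) (hQs2 : Qs * Qs = Qp)
    (hS : S.PosSemidef) (hS2 : S * S = Qs * Y * Qs) :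
    2 * S.trace ≤ (G⁻¹ * Qp).trace + (Y * G).trace := by
  have hGu : IsUnit G.det := (Matrix.isUnit_iff_isUnit_det _).1 hG.isUnit
  have hQu : IsUnit Qs.det := by
    have h := (Matrix.isUnit_iff_isUnit_det _).1 hQp.isUnit
    rw [← hQs2, det_mul] at h
    exact isUnit_of_mul_isUnit_left h
  have hYeq : Y = Qs⁻¹ * (S * S) * Qs⁻¹ := by
    rw [hS2, Matrix.mul_assoc Qs, nonsing_inv_mul_cancel_left _ _ hQu,
      mul_nonsing_inv_cancel_right _ _ hQu]
  have key := (hG.posSemidef.conjTranspose_mul_mul_same (G⁻¹ * Qs - Qs⁻¹ * S)).trace_nonneg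
  have hC : (G⁻¹ * Qs - Qs⁻¹ * S)ᴴ = Qs * G⁻¹ - S * Qs⁻¹ := by
    rw [conjTranspose_sub, conjTranspose_mul, conjTranspose_mul, conjTranspose_nonsing_inv,
      conjTranspose_nonsing_inv, hG.isHermitian.eq, hQs.isHermitian.eq, hS.isHermitian.eq]
  have hexp : (Qs * G⁻¹ - S * Qs⁻¹) * G * (G⁻¹ * Qs - Qs⁻¹ * S)
      = Qs * (G⁻¹ * Qs) - S - S + (S * Qs⁻¹) * (G * (Qs⁻¹ * S)) := by
    have h1 : G * (G⁻¹ * Qs - Qs⁻¹ * S) = Qs - G * (Qs⁻¹ * S) := by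
      rw [Matrix.mul_sub, mul_nonsing_inv_cancel_left _ _ hGu]
    rw [Matrix.mul_assoc, h1, Matrix.sub_mul, Matrix.mul_sub, Matrix.mul_sub,
      Matrix.mul_assoc Qs, Matrix.mul_assoc Qs, nonsing_inv_mul_cancel_left _ _ hGu,
      mul_nonsing_inv_cancel_left _ _ hQu, nonsing_inv_mul_cancel_right _ _ hQu]
    abel
  have ht1 : (Qs * (G⁻¹ * Qs)).trace = (G⁻¹ * Qp).trace := by
    rw [trace_mul_comm, Matrix.mul_assoc, hQs2]
  have ht2 : ((S * Qs⁻¹) * (G * (Qs⁻¹ * S))).trace = (Y * G).trace := by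
    rw [hYeq, ← Matrix.mul_assoc (S * Qs⁻¹), trace_mul_comm]
    simp only [Matrix.mul_assoc]
  rw [hC, hexp, trace_add, trace_sub, trace_sub, ht1, ht2] at key
  linarith
end

section
/- Let 𝟙 ∈ ℝⁿ be the vector of all ones, let G_p, Q_p, R be symmetric n×n real matrices with Q_p positive definite, let E be an n×m real matrix, let γ > 0, and set c = diag(Eᵀ R E). Suppose (G, x₊, x₋) is primal feasible: G = G_p + E·diag(x₊ − x₋)·Eᵀ, G is positive definite, x₊ ≥ 0, and x₋ ≥ 0 (entrywise). Suppose Y is dual feasible: Y is symmetric positive definite and every entry of the vector diag(Eᵀ(Y − R)E) has absolute value at most γ. Then 2·trace((Q_p^{1/2} Y Q_p^{1/2})^{1/2}) − trace(Y G_p) ≤ trace(G⁻¹ Q_p) + (γ𝟙 + c)ᵀ x₊ + (γ𝟙 − c)ᵀ x₋. -/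
open Matrix

/-!
The constraint `G = Gp + E diag(x₊ - x₋) Eᵀ` and dual feasibility bound `tr (Y G)` by
`tr (Y Gp)` plus the linear terms of the primal objective (`trace_mul_le_of_feasible`), so it
remains to see `2 tr S ≤ tr (Y G) + tr (G⁻¹ Qp)` (`two_trace_sqrt_le`).  With
`W = Qs G⁻¹ Qs`, this is the nonnegativity of the trace of
`(W - S) W⁻¹ (W - S) = W - 2 S + S W⁻¹ S`, a positive semidefinite matrix, since
`tr (S W⁻¹ S) = tr (S² Qs⁻¹ G Qs⁻¹) = tr (Y G)`.
-/

/-- The completion-of-squares inequality.  Only symmetry of `Qs` and `S` matters here, not which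
square roots of `Qs * Qs` and `Qs * Y * Qs` they are. -/
lemma two_trace_sqrt_le {n : ℕ} {G Y Qs S : Matrix (Fin n) (Fin n) ℝ} (hG : G.PosDef)
    (hQs : Qs.IsHermitian) (hQ : IsUnit Qs.det) (hS : S.IsHermitian)
    (hS2 : S * S = Qs * Y * Qs) :
    2 * S.trace ≤ (Y * G).trace + (G⁻¹ * (Qs * Qs)).trace := by
  have hGu : IsUnit G.det := hG.det_pos.ne'.isUnit
  -- `B = Qs⁻¹ (W - S)`, so that `Bᴴ G B = (W - S) W⁻¹ (W - S)` for `W = Qs G⁻¹ Qs`.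
  have hpsd := (hG.posSemidef.conjTranspose_mul_mul_same (G⁻¹ * Qs - Qs⁻¹ * S)).trace_nonneg
  have hB : (G⁻¹ * Qs - Qs⁻¹ * S)ᴴ = Qs * G⁻¹ - S * Qs⁻¹ := by
    rw [conjTranspose_sub, conjTranspose_mul, conjTranspose_mul, conjTranspose_nonsing_inv,
      conjTranspose_nonsing_inv, hQs.eq, hS.eq, hG.isHermitian.eq]
  have hexp : (Qs * G⁻¹ - S * Qs⁻¹) * G * (G⁻¹ * Qs - Qs⁻¹ * S)
      = Qs * G⁻¹ * Qs - S - S + S * (Qs⁻¹ * G * Qs⁻¹ * S) := by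
    have h1 : Qs * G⁻¹ * G = Qs := nonsing_inv_mul_cancel_right _ _ hGu
    have h2 : Qs * (Qs⁻¹ * S) = S := mul_nonsing_inv_cancel_left _ _ hQ
    have h3 : S * Qs⁻¹ * G * (G⁻¹ * Qs) = S := by
      rw [← Matrix.mul_assoc, mul_nonsing_inv_cancel_right _ _ hGu,
        nonsing_inv_mul_cancel_right _ _ hQ]
    rw [Matrix.sub_mul, h1, Matrix.sub_mul, Matrix.mul_sub, Matrix.mul_sub, h2, h3]
    simp only [Matrix.mul_assoc]
    abel
  have ht1 : (Qs * G⁻¹ * Qs).trace = (G⁻¹ * (Qs * Qs)).trace := by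
    rw [Matrix.mul_assoc, trace_mul_comm, Matrix.mul_assoc]
  have ht2 : (S * (Qs⁻¹ * G * Qs⁻¹ * S)).trace = (Y * G).trace := by
    rw [trace_mul_comm, Matrix.mul_assoc, hS2, trace_mul_comm, Matrix.mul_assoc Qs Y Qs,
      trace_mul_comm]
    have : Qs⁻¹ * G * Qs⁻¹ * (Qs * (Y * Qs)) = Qs⁻¹ * (G * (Y * Qs)) := by
      rw [Matrix.mul_assoc (Qs⁻¹ * G), nonsing_inv_mul_cancel_left _ _ hQ, Matrix.mul_assoc]
    rw [this, trace_mul_comm, Matrix.mul_assoc, Matrix.mul_assoc, mul_nonsing_inv _ hQ,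
      Matrix.mul_one, trace_mul_comm]
  rw [hB, hexp, trace_add, trace_sub, trace_sub, ht1, ht2] at hpsd
  linarith

/-- The dual constraint pairs with `x₊, x₋ ≥ 0` to bound the variable part of `tr (Y G)`. -/
lemma trace_mul_le_of_feasible {n m : ℕ} {R Y : Matrix (Fin n) (Fin n) ℝ}
    {E : Matrix (Fin n) (Fin m) ℝ} {γ : ℝ} {xp xm : Fin m → ℝ}
    (hxp : ∀ l, 0 ≤ xp l) (hxm : ∀ l, 0 ≤ xm l)
    (hY : ∀ l, |(Eᵀ * (Y - R) * E).diag l| ≤ γ) :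
    (Y * (E * Matrix.diagonal (xp - xm) * Eᵀ)).trace ≤
      (γ • (1 : Fin m → ℝ) + (Eᵀ * R * E).diag) ⬝ᵥ xp
        + (γ • (1 : Fin m → ℝ) - (Eᵀ * R * E).diag) ⬝ᵥ xm := by
  have h : (Y * (E * Matrix.diagonal (xp - xm) * Eᵀ)).trace
      = ∑ l, (Eᵀ * Y * E) l l * (xp l - xm l) := by
    rw [← Matrix.mul_assoc, trace_mul_comm, ← Matrix.mul_assoc, ← Matrix.mul_assoc]
    simp [Matrix.trace, Matrix.mul_diagonal]
  rw [h, dotProduct, dotProduct, ← Finset.sum_add_distrib]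
  refine Finset.sum_le_sum fun l _ => ?_
  have hl := abs_le.mp (hY l)
  simp only [Matrix.mul_sub, Matrix.sub_mul, diag_apply, Matrix.sub_apply] at hl
  simp only [Pi.add_apply, Pi.sub_apply, Pi.smul_apply, Pi.one_apply, smul_eq_mul, mul_one,
    diag_apply]
  nlinarith [mul_nonneg (hxp l) (sub_nonneg.mpr hl.2),
    mul_nonneg (hxm l) (sub_nonneg.mpr hl.1)]

theorem stmt_5 (n m : ℕ)
    (Gp Qp R G Y : Matrix (Fin n) (Fin n) ℝ) (E : Matrix (Fin n) (Fin m) ℝ)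
    (γ : ℝ) (hγ : 0 < γ)
    (hGp : Gp.IsSymm) (hQp : Qp.IsSymm) (hR : R.IsSymm) (hQppd : Qp.PosDef)
    (xp xm : Fin m → ℝ)
    (hG : G = Gp + E * Matrix.diagonal (xp - xm) * Eᵀ)
    (hGpd : G.PosDef) (hxp : ∀ l, 0 ≤ xp l) (hxm : ∀ l, 0 ≤ xm l)
    (hYpd : Y.PosDef)
    (hYfeas : ∀ l, |(Eᵀ * (Y - R) * E).diag l| ≤ γ)
    (Qs S : Matrix (Fin n) (Fin n) ℝ)
    (hQs : Qs.PosSemidef) (hQs2 : Qs * Qs = Qp)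
    (hS : S.PosSemidef) (hS2 : S * S = Qs * Y * Qs) :
    2 * S.trace - (Y * Gp).trace ≤
      (G⁻¹ * Qp).trace + (γ • (1 : Fin m → ℝ) + (Eᵀ * R * E).diag) ⬝ᵥ xp
        + (γ • (1 : Fin m → ℝ) - (Eᵀ * R * E).diag) ⬝ᵥ xm := by
  have hQ : IsUnit Qs.det := by
    have h := hQppd.det_pos.ne'
    rw [← hQs2, det_mul] at h
    exact (left_ne_zero_of_mul h).isUnit
  have h1 := two_trace_sqrt_le hGpd hQs.isHermitian hQ hS.isHermitian hS2
  have h2 := trace_mul_le_of_feasible hxp hxm hYfeas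
  have h3 : (Y * G).trace
      = (Y * Gp).trace + (Y * (E * Matrix.diagonal (xp - xm) * Eᵀ)).trace := by
    rw [hG, Matrix.mul_add, trace_add]
  rw [hQs2] at h1
  linarith
end

section
/- Let 𝟙 ∈ ℝⁿ be the vector of all ones, let G_p, Q_p, R be symmetric n×n real matrices with Q_p positive definite, let E be an n×m real matrix, let γ ∈ ℝ, and set c = diag(Eᵀ R E). Let x₊, x₋ ∈ ℝᵐ and suppose G = G_p + E·diag(x₊ − x₋)·Eᵀ is positive definite. Define Y = G⁻¹ Q_p G⁻¹, y₊ = γ𝟙 − diag(Eᵀ(Y − R)E), and y₋ = γ𝟙 + diag(Eᵀ(Y − R)E). Then the difference between the primal objective trace(G⁻¹Q_p) + (γ𝟙 + c)ᵀx₊ + (γ𝟙 − c)ᵀx₋ and the dual objective 2·trace((Q_p^{1/2} Y Q_p^{1/2})^{1/2}) − trace(Y G_p) equals y₊ᵀ x₊ + y₋ᵀ x₋. -/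
/-!
The matrix `Qs * G⁻¹ * Qs` is positive semidefinite and squares to `Qs * Y * Qs`, so by uniqueness of
the positive semidefinite square root it is `S`; hence `tr S = tr (G⁻¹ Qp)`. Also
`tr (Y G) = tr (G⁻¹ Qp)`, so the trace terms of the gap collapse to
`tr (Y Gp) - tr (Y G) = -tr (Y E diag(xp - xm) Eᵀ) = -diag(Eᵀ Y E) ⬝ᵥ (xp - xm)`,
and the remaining terms match by linearity.
-/

open Matrix

open scoped MatrixOrder Matrix.Norms.L2Operator in
/-- Uniqueness of the positive semidefinite square root. -/
lemma posSemidef_eq_of_mul_self_eq {n : ℕ} {A B : Matrix (Fin n) (Fin n) ℝ}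
    (hA : A.PosSemidef) (hB : B.PosSemidef) (h : A * A = B * B) : A = B := by
  rw [← CFC.sqrt_unique h hA.nonneg, CFC.sqrt_mul_self B hB.nonneg]

lemma trace_mul_diagonal_conj {n m : ℕ} (A : Matrix (Fin n) (Fin n) ℝ)
    (E : Matrix (Fin n) (Fin m) ℝ) (x : Fin m → ℝ) :
    (A * (E * Matrix.diagonal x * Eᵀ)).trace = (Eᵀ * A * E).diag ⬝ᵥ x := by
  have h : (A * (E * Matrix.diagonal x * Eᵀ)).trace
      = ((Eᵀ * A * E) * Matrix.diagonal x).trace := by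
    rw [← Matrix.mul_assoc, Matrix.trace_mul_comm]
    simp only [Matrix.mul_assoc]
  rw [h]
  simp [Matrix.trace, dotProduct, Matrix.mul_diagonal]

theorem stmt_6 (n m : ℕ)
    (Gp Qp R G Y : Matrix (Fin n) (Fin n) ℝ) (E : Matrix (Fin n) (Fin m) ℝ)
    (γ : ℝ)
    (hGp : Gp.IsSymm) (hQp : Qp.IsSymm) (hR : R.IsSymm) (hQppd : Qp.PosDef)
    (xp xm : Fin m → ℝ)
    (hG : G = Gp + E * Matrix.diagonal (xp - xm) * Eᵀ)
    (hGpd : G.PosDef)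
    (hY : Y = G⁻¹ * Qp * G⁻¹)
    (yp ym : Fin m → ℝ)
    (hyp : yp = γ • (1 : Fin m → ℝ) - (Eᵀ * (Y - R) * E).diag)
    (hym : ym = γ • (1 : Fin m → ℝ) + (Eᵀ * (Y - R) * E).diag)
    (Qs S : Matrix (Fin n) (Fin n) ℝ)
    (hQs : Qs.PosSemidef) (hQs2 : Qs * Qs = Qp)
    (hS : S.PosSemidef) (hS2 : S * S = Qs * Y * Qs) :
    ((G⁻¹ * Qp).trace + (γ • (1 : Fin m → ℝ) + (Eᵀ * R * E).diag) ⬝ᵥ xp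
        + (γ • (1 : Fin m → ℝ) - (Eᵀ * R * E).diag) ⬝ᵥ xm)
      - (2 * S.trace - (Y * Gp).trace)
      = yp ⬝ᵥ xp + ym ⬝ᵥ xm := by
  have hdet : IsUnit G.det := (Matrix.isUnit_iff_isUnit_det G).mp hGpd.isUnit
  have hSeq : S = Qs * G⁻¹ * Qs := by
    apply posSemidef_eq_of_mul_self_eq hS
    · have h := hGpd.inv.posSemidef.mul_mul_conjTranspose_same Qs
      rwa [hQs.isHermitian.eq] at h
    · rw [hS2, hY, ← hQs2]
      simp only [Matrix.mul_assoc]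
  have hStr : S.trace = (G⁻¹ * Qp).trace := by
    rw [hSeq, Matrix.mul_assoc, Matrix.trace_mul_comm, Matrix.mul_assoc, hQs2]
  have hYG : (Y * G).trace = (G⁻¹ * Qp).trace := by
    rw [hY, Matrix.mul_assoc, Matrix.nonsing_inv_mul G hdet, Matrix.mul_one]
  have hsplit : (Y * G).trace = (Y * Gp).trace + (Eᵀ * Y * E).diag ⬝ᵥ (xp - xm) := by
    rw [← trace_mul_diagonal_conj, ← Matrix.trace_add, ← Matrix.mul_add, ← hG]
  have hdiag : (Eᵀ * (Y - R) * E).diag = (Eᵀ * Y * E).diag - (Eᵀ * R * E).diag := by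
    rw [Matrix.mul_sub, Matrix.sub_mul, Matrix.diag_sub]
  rw [hyp, hym, hdiag, hStr]
  rw [hYG, dotProduct_sub] at hsplit
  simp only [add_dotProduct, sub_dotProduct]
  linarith
end

section
/- Let 𝟙 ∈ ℝⁿ be the vector of all ones, let G_p, Q_p, R be symmetric n×n real matrices with Q_p positive definite, let E be an n×m real matrix, let γ > 0, and set c = diag(Eᵀ R E). Suppose (G, x₊, x₋) is primal feasible (G = G_p + E·diag(x₊ − x₋)·Eᵀ positive definite, x₊ ≥ 0, x₋ ≥ 0), Y is dual feasible (Y symmetric positive definite with every entry of diag(Eᵀ(Y − R)E) of absolute value at most γ), and the primal objective trace(G⁻¹Q_p) + (γ𝟙 + c)ᵀx₊ + (γ𝟙 − c)ᵀx₋ equals the dual objective 2·trace((Q_p^{1/2} Y Q_p^{1/2})^{1/2}) − trace(Y G_p). Then (G, x₊, x₋) is globally optimal: for every primal feasible (G', x'₊, x'₋), trace(G⁻¹Q_p) + (γ𝟙 + c)ᵀx₊ + (γ𝟙 − c)ᵀx₋ ≤ trace(G'⁻¹Q_p) + (γ𝟙 + c)ᵀx'₊ + (γ𝟙 − c)ᵀx'₋.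 -/
/-!
The claim is weak duality: every primal objective value is at least the dual value at `Y`, which by
hypothesis equals the objective at `(G, xp, xm)`.

With `W = Qs⁻¹ S Qs⁻¹` one has `W Qp W = Y` and `tr (W Qp) = tr S`, so completing the square gives
`0 ≤ tr (Qs (G'⁻¹ - W) G' (G'⁻¹ - W) Qs) = tr (G'⁻¹ Qp) - 2 tr S + tr (Y G')`
(`two_mul_trace_sqrt_le`). Expanding `tr (Y G')` along `G' = Gp + E diag(xp' - xm') Eᵀ`
(`trace_mul_conj_diagonal`), the gap between the two objectives is at least
`∑ (γ - d) xp' + (γ + d) xm'` with `d = diag (Eᵀ (Y - R) E)`, which is nonnegative as `|d| ≤ γ`.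
-/

open Matrix

/-- The bound `tr (G⁻¹ Qs²) + tr (Y G) ≥ 2 tr S`, obtained by completing the square: the difference
is `tr (Dᵀ G D)` for `D = (G⁻¹ - W) Qs` and `W = Qs⁻¹ S Qs⁻¹`. -/
lemma two_mul_trace_sqrt_le {n : ℕ} {G Y Qs S : Matrix (Fin n) (Fin n) ℝ}
    (hG : G.PosDef) (hQs : Qs.IsHermitian) (hdet : IsUnit Qs.det)
    (hS : S.IsHermitian) (hS2 : S * S = Qs * Y * Qs) :
    2 * S.trace ≤ (G⁻¹ * (Qs * Qs)).trace + (Y * G).trace := by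
  have hGdet : IsUnit G.det := hG.det_pos.ne'.isUnit
  have h1 : Qs * Qs⁻¹ = 1 := mul_nonsing_inv _ hdet
  have h2 : Qs⁻¹ * Qs = 1 := nonsing_inv_mul _ hdet
  have h3 : G * G⁻¹ = 1 := mul_nonsing_inv _ hGdet
  have h4 : G⁻¹ * G = 1 := nonsing_inv_mul _ hGdet
  obtain ⟨W, hW⟩ : ∃ W, W = Qs⁻¹ * S * Qs⁻¹ := ⟨_, rfl⟩
  have hQW : Qs * W = S * Qs⁻¹ := by
    rw [hW, ← mul_assoc, ← mul_assoc, h1, one_mul]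
  have hWQ : W * Qs = Qs⁻¹ * S := by
    rw [hW, mul_assoc, h2, mul_one]
  have hWH : W.IsHermitian := by
    have hi := hQs.inv
    rw [IsHermitian] at *
    rw [hW, conjTranspose_mul, conjTranspose_mul, hi, hS, mul_assoc]
  have hWQW : W * Qs * (Qs * W) = Y := by
    rw [hQW, hWQ]
    calc Qs⁻¹ * S * (S * Qs⁻¹) = Qs⁻¹ * (S * S) * Qs⁻¹ := by simp only [mul_assoc]
      _ = (Qs⁻¹ * Qs) * Y * (Qs * Qs⁻¹) := by rw [hS2]; simp only [mul_assoc]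
      _ = Y := by rw [h1, h2, one_mul, mul_one]
  have hDH : (G⁻¹ - W)ᴴ = G⁻¹ - W := (hG.isHermitian.inv.sub hWH)
  have hps := (hG.posSemidef.conjTranspose_mul_mul_same ((G⁻¹ - W) * Qs)).trace_nonneg
  have hsq : ((G⁻¹ - W) * Qs)ᴴ * G * ((G⁻¹ - W) * Qs)
      = Qs * G⁻¹ * Qs - (Qs * W) * Qs - Qs * (W * Qs) + Qs * W * G * (W * Qs) := by
    rw [conjTranspose_mul, hDH, hQs]
    calc Qs * (G⁻¹ - W) * G * ((G⁻¹ - W) * Qs)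
        = Qs * (G⁻¹ * G * G⁻¹) * Qs - Qs * W * (G * G⁻¹) * Qs - Qs * (G⁻¹ * G) * (W * Qs)
          + Qs * W * G * (W * Qs) := by noncomm_ring
      _ = _ := by rw [h3, h4]; simp only [one_mul, mul_one]
  have t1 : (Qs * G⁻¹ * Qs).trace = (G⁻¹ * (Qs * Qs)).trace := by
    rw [mul_assoc, trace_mul_comm, mul_assoc]
  have t2 : (Qs * W * Qs).trace = S.trace := by rw [hQW, mul_assoc, h2, mul_one]
  have t3 : (Qs * (W * Qs)).trace = S.trace := by rw [← mul_assoc, t2]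
  have t4 : (Qs * W * G * (W * Qs)).trace = (Y * G).trace := by
    rw [trace_mul_comm, ← mul_assoc, hWQW]
  rw [hsq, trace_add, trace_sub, trace_sub, t1, t2, t3, t4] at hps
  linarith

lemma trace_mul_conj_diagonal {n m : ℕ} (Y : Matrix (Fin n) (Fin n) ℝ)
    (E : Matrix (Fin n) (Fin m) ℝ) (x : Fin m → ℝ) :
    (Y * (E * diagonal x * Eᵀ)).trace = (Eᵀ * Y * E).diag ⬝ᵥ x := by
  have h : (Y * (E * diagonal x * Eᵀ)).trace = (Eᵀ * Y * E * diagonal x).trace := by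
    rw [← Matrix.mul_assoc, trace_mul_comm]
    simp only [Matrix.mul_assoc]
  rw [h]
  simp [trace, dotProduct, mul_diagonal]

theorem stmt_7 (n m : ℕ)
    (Gp Qp R G Y : Matrix (Fin n) (Fin n) ℝ) (E : Matrix (Fin n) (Fin m) ℝ)
    (γ : ℝ) (hγ : 0 < γ)
    (hGp : Gp.IsSymm) (hQp : Qp.IsSymm) (hR : R.IsSymm) (hQppd : Qp.PosDef)
    (xp xm : Fin m → ℝ)
    (hG : G = Gp + E * Matrix.diagonal (xp - xm) * Eᵀ)
    (hGpd : G.PosDef) (hxp : ∀ l, 0 ≤ xp l) (hxm : ∀ l, 0 ≤ xm l)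
    (hYpd : Y.PosDef)
    (hYfeas : ∀ l, |(Eᵀ * (Y - R) * E).diag l| ≤ γ)
    (Qs S : Matrix (Fin n) (Fin n) ℝ)
    (hQs : Qs.PosSemidef) (hQs2 : Qs * Qs = Qp)
    (hS : S.PosSemidef) (hS2 : S * S = Qs * Y * Qs)
    (heq : (G⁻¹ * Qp).trace + (γ • (1 : Fin m → ℝ) + (Eᵀ * R * E).diag) ⬝ᵥ xp
        + (γ • (1 : Fin m → ℝ) - (Eᵀ * R * E).diag) ⬝ᵥ xm
      = 2 * S.trace - (Y * Gp).trace) :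
    ∀ (G' : Matrix (Fin n) (Fin n) ℝ) (xp' xm' : Fin m → ℝ),
      G' = Gp + E * Matrix.diagonal (xp' - xm') * Eᵀ → G'.PosDef →
      (∀ l, 0 ≤ xp' l) → (∀ l, 0 ≤ xm' l) →
      (G⁻¹ * Qp).trace + (γ • (1 : Fin m → ℝ) + (Eᵀ * R * E).diag) ⬝ᵥ xp
          + (γ • (1 : Fin m → ℝ) - (Eᵀ * R * E).diag) ⬝ᵥ xm
        ≤ (G'⁻¹ * Qp).trace + (γ • (1 : Fin m → ℝ) + (Eᵀ * R * E).diag) ⬝ᵥ xp'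
          + (γ • (1 : Fin m → ℝ) - (Eᵀ * R * E).diag) ⬝ᵥ xm' := by
  intro G' xp' xm' hG' hG'pd hxp' hxm'
  have hdet : IsUnit Qs.det := by
    have h := hQppd.det_pos.ne'
    rw [← hQs2, det_mul] at h
    exact (left_ne_zero_of_mul h).isUnit
  have hsqrt := two_mul_trace_sqrt_le hG'pd hQs.isHermitian hdet hS.isHermitian hS2
  have hexp : (Y * G').trace = (Y * Gp).trace + (Eᵀ * Y * E).diag ⬝ᵥ (xp' - xm') := by
    rw [hG', mul_add, trace_add, trace_mul_conj_diagonal]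
  have hgap : 0 ≤ (γ • (1 : Fin m → ℝ) + (Eᵀ * R * E).diag) ⬝ᵥ xp'
      + (γ • (1 : Fin m → ℝ) - (Eᵀ * R * E).diag) ⬝ᵥ xm'
      - (Eᵀ * Y * E).diag ⬝ᵥ (xp' - xm') := by
    simp only [dotProduct]
    rw [← Finset.sum_add_distrib, ← Finset.sum_sub_distrib]
    refine Finset.sum_nonneg fun l _ => ?_
    have hl := abs_le.1 (hYfeas l)
    rw [Matrix.mul_sub, Matrix.sub_mul, diag_sub] at hl
    simp only [Pi.add_apply, Pi.sub_apply, Pi.smul_apply, Pi.one_apply, smul_eq_mul,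
      mul_one] at hl ⊢
    nlinarith [mul_nonneg (sub_nonneg.2 hl.2) (hxp' l),
      mul_nonneg (sub_nonneg.2 hl.1) (hxm' l)]
  rw [hQs2] at hsqrt
  linarith
end

section
/- Let 𝟙 ∈ ℝⁿ be the vector of all ones, let E be an n×m real matrix with columns ξ₁,…,ξ_m each satisfying ξ_lᵀ𝟙 = 0 and ξ_lᵀξ_l = 2, let r > 0, R = r·I, and γ > 0. Let Y be a symmetric positive definite n×n matrix with Y𝟙 = 𝟙, and let β satisfy 0 < β ≤ 1 and β ≤ (γ + 2r)/(max_l (ξ_lᵀ(Y − R)ξ_l) + 2r). Then Ŷ = βY + ((1−β)/n)𝟙𝟙ᵀ is symmetric positive definite, Ŷ𝟙 = 𝟙, and diag(Eᵀ(Ŷ − R)E) ≤ γ𝟙 entrywise, i.e., Ŷ is feasible for the dual problem (D1) of growing connected resistive networks. -/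
open Matrix

/-!
Since `ξ_l` is orthogonal to `𝟙`, the rank-one term `𝟙𝟙ᵀ` is invisible to `ξ_l`, so that
`ξ_lᵀ(Ŷ - R)ξ_l = β ξ_lᵀYξ_l - 2r`. As `0 < ξ_lᵀYξ_l ≤ max_k ξ_kᵀ(Y - R)ξ_k + 2r`, the denominator
in the bound on `β` is positive and clearing it gives `β ξ_lᵀYξ_l ≤ γ + 2r`. Positive definiteness
holds because `βY` is positive definite and `𝟙𝟙ᵀ` is positive semidefinite.
-/

theorem stmt_8 (n m : ℕ) (hm : 0 < m)
    (E : Matrix (Fin n) (Fin m) ℝ)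
    (hE1 : ∀ l, (fun i => E i l) ⬝ᵥ (1 : Fin n → ℝ) = 0)
    (hE2 : ∀ l, (fun i => E i l) ⬝ᵥ (fun i => E i l) = 2)
    (r : ℝ) (hr : 0 < r) (γ : ℝ) (hγ : 0 < γ)
    (Y : Matrix (Fin n) (Fin n) ℝ) (hY : Y.PosDef)
    (hY1 : Y *ᵥ (1 : Fin n → ℝ) = 1)
    (β : ℝ) (hβ0 : 0 < β) (hβ1 : β ≤ 1)
    (hβ2 : β ≤ (γ + 2 * r) /
      ((⨆ l : Fin m, (fun i => E i l) ⬝ᵥ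
          ((Y - r • (1 : Matrix (Fin n) (Fin n) ℝ)) *ᵥ (fun i => E i l))) + 2 * r)) :
    (β • Y + ((1 - β) / n) • Matrix.of (fun _ _ => (1 : ℝ))).PosDef ∧
    (β • Y + ((1 - β) / n) • Matrix.of (fun _ _ => (1 : ℝ))) *ᵥ (1 : Fin n → ℝ) = 1 ∧
    ∀ l, (fun i => E i l) ⬝ᵥ
        (((β • Y + ((1 - β) / n) • Matrix.of (fun _ _ => (1 : ℝ)))
            - r • (1 : Matrix (Fin n) (Fin n) ℝ)) *ᵥ (fun i => E i l)) ≤ γ := by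
  have hJ : (Matrix.of (fun _ _ => (1 : ℝ)) : Matrix (Fin n) (Fin n) ℝ).PosSemidef := by
    have h := posSemidef_vecMulVec_self_star (1 : Fin n → ℝ)
    convert h using 1
    ext i j
    simp [vecMulVec_apply]
  refine ⟨(hY.smul hβ0).add_posSemidef
    (hJ.smul (div_nonneg (sub_nonneg.2 hβ1) (Nat.cast_nonneg n))), ?_, ?_⟩
  · rw [add_mulVec, smul_mulVec, smul_mulVec, hY1]
    ext i
    -- the index `i` rules out the junk value of division by `n = 0`
    have hn : (n : ℝ) ≠ 0 := by
      have := i.pos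
      positivity
    simp [mulVec, dotProduct]
    field_simp
    ring
  · intro l
    set q : Fin m → ℝ := fun l => (fun i => E i l) ⬝ᵥ
      ((Y - r • (1 : Matrix (Fin n) (Fin n) ℝ)) *ᵥ (fun i => E i l)) with hq
    have hql : q l = (fun i => E i l) ⬝ᵥ (Y *ᵥ (fun i => E i l)) - 2 * r := by
      simp only [hq, sub_mulVec, smul_mulVec, one_mulVec, dotProduct_sub, dotProduct_smul, hE2,
        smul_eq_mul]
      ring
    have hle : q l ≤ ⨆ l, q l := le_ciSup (Set.finite_range q).bddAbove l
    have hne : (fun i => E i l) ≠ 0 := by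
      intro h
      have h2 := hE2 l
      rw [h] at h2
      simp at h2
    have hpos : 0 < (fun i => E i l) ⬝ᵥ (Y *ᵥ (fun i => E i l)) := by
      simpa using hY.dotProduct_mulVec_pos hne
    have hJ0 : (Matrix.of (fun _ _ => (1 : ℝ)) : Matrix (Fin n) (Fin n) ℝ) *ᵥ
        (fun i => E i l) = 0 := by
      ext i
      simpa [mulVec, dotProduct] using hE1 l
    rw [le_div_iff₀ (by linarith)] at hβ2
    simp only [sub_mulVec, add_mulVec, smul_mulVec, one_mulVec, hJ0, dotProduct_sub,
      dotProduct_add, dotProduct_smul, hE2, smul_eq_mul, dotProduct_zero, smul_zero]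
    have := mul_le_mul_of_nonneg_left hle hβ0.le
    rw [hql] at this
    linarith
end
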